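/- (Relative Fatou theorem in the unit ball.) Let n ≥ 2, α ∈ (0,2), let ν be a nonzero finite Borel measure on the unit sphere S ⊆ ℝⁿ, and define h(x) := ∫_S M(x,w) ν(dw) for x in the open unit ball B. Then for every function u that is nonnegative and α-harmonic in B, for ν-almost every z ∈ S and every β > 1, the limit of u(x)/h(x) as x → z with x ∈ A^β_z exists and is finite. -/

import Mathlib

open Metric Set MeasureTheory Filter

/-- The α-stable Poisson kernel of the ball `B(x₀, r)`. -/
noncomputable def stablePoissonKernel (n : ℕ) (α : ℝ) (x₀ : EuclideanSpace ℝ (Fin n))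
    (r : ℝ) (x v : EuclideanSpace ℝ (Fin n)) : ℝ :=
  (Real.Gamma (n / 2) * Real.pi ^ (-(n : ℝ) / 2 - 1) * Real.sin (Real.pi * α / 2)) *
    ((r ^ 2 - dist x x₀ ^ 2) / (dist v x₀ ^ 2 - r ^ 2)) ^ (α / 2) *
    dist x v ^ (-(n : ℝ))

/-- `u : ℝⁿ → [0,∞)` Borel with `∫ u(x)(1+|x|)^{−n−α} dx < ∞` is α-harmonic in the
open set `D` if, for every ball whose closure lies in `D` and every point `x` of the
ball, `∫_{|v−x₀|>r} P_{x₀,r}(x,v) u(v) dv` is finite and equals `u(x)`. -/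
def IsAlphaHarmonic (n : ℕ) (α : ℝ) (D : Set (EuclideanSpace ℝ (Fin n)))
    (u : EuclideanSpace ℝ (Fin n) → ℝ) : Prop :=
  Measurable u ∧ (∀ x, 0 ≤ u x) ∧
    Integrable (fun x => u x * (1 + ‖x‖) ^ (-(n : ℝ) - α)) ∧
    ∀ (x₀ : EuclideanSpace ℝ (Fin n)) (r : ℝ), 0 < r → closedBall x₀ r ⊆ D →
      ∀ x ∈ ball x₀ r,
        IntegrableOn (fun v => stablePoissonKernel n α x₀ r x v * u v)
          {v | r < dist v x₀} ∧
        ∫ v in {v | r < dist v x₀}, stablePoissonKernel n α x₀ r x v * u v = u x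

/-- Martin kernel of the unit ball for the symmetric α-stable process, normalized at
the origin: `M(x,w) = (1−|x|²)^{α/2} |x−w|^{−n}`. -/
noncomputable def martinKernel (n : ℕ) (α : ℝ) (x w : EuclideanSpace ℝ (Fin n)) : ℝ :=
  (1 - ‖x‖ ^ 2) ^ (α / 2) * dist x w ^ (-(n : ℝ))

/-- Stolz open set of the unit ball at a boundary point `z`, with angle `β > 1`:
`A^β_z = { y ∈ B : 1−|y| < 1/3 ∧ |y−z| < β(1−|y|) }`. -/
def stolzSet (n : ℕ) (β : ℝ) (z : EuclideanSpace ℝ (Fin n)) :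
    Set (EuclideanSpace ℝ (Fin n)) :=
  {y | y ∈ ball (0 : EuclideanSpace ℝ (Fin n)) 1 ∧ 1 - ‖y‖ < 1 / 3 ∧
    dist y z < β * (1 - ‖y‖)}

/-!
Dividing the Poisson kernel `P_{0,r}(x, ·)` by `P_{0,r}(0, ·)` writes `u(x)`, up to an explicit
factor, as the integral of a kernel `K(x, v)`, bounded in `v`, against measures on `{|v| > r}` of
constant mass `u(0)`. Their tails are dominated by a multiple of `u(v) (1 + |v|)^{-n-α} dv`, so by
Prokhorov's theorem some limit `P` as `r → 1` satisfies
`u(x) = (1 - |x|²)^{α/2} ∫ K(x, v) P(dv)`. The function `h` has the same form with `ν` instead of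
`P`, and `u / h` is a quotient of two potentials of one kernel.

For `ν`-almost every `z`, Besicovitch differentiation shows that `P` differs from `(dP/dν)(z) • ν`
by a measure whose mass on small balls around `z` is negligible compared with that of `ν`. In a
Stolz region `K(x, v)` is comparable to a decreasing function of `|v - z|`, whose superlevel sets
are balls, so this carries over to the potentials by the layer cake formula. The sphere is Lebesgue
null, hence `ν(B(z, s)) / sⁿ → ∞` at `ν`-almost every `z`; this makes the potential of `ν` blow up
in Stolz regions, and mass away from `z` does not matter. The limit is `(dP/dν)(z)`.
-/

namespace RelativeFatou

open Module (finrank)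
open scoped Topology ENNReal NNReal BoundedContinuousFunction

section LayerCake

variable {X : Type*} [PseudoMetricSpace X]

lemma superlevel_comp_max_dist_inter_closedBall {t δ a : ℝ} (htδ : t ≤ δ) {φ : ℝ → ℝ}
    (hφ : AntitoneOn φ (Ici t)) (hφc : ContinuousOn φ (Ici t)) (z : X) :
    {v | a ≤ φ (max t (dist v z))} ∩ closedBall z δ = ∅ ∨
      ∃ s ∈ Icc t δ, {v | a ≤ φ (max t (dist v z))} ∩ closedBall z δ = closedBall z s := by
  have hcompact : IsCompact (Icc t δ ∩ φ ⁻¹' Ici a) :=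
    isCompact_Icc.of_isClosed_subset ((hφc.mono Icc_subset_Ici_self).preimage_isClosed_of_isClosed
      isClosed_Icc isClosed_Ici) inter_subset_left
  have hmem : ∀ v ∈ {v | a ≤ φ (max t (dist v z))} ∩ closedBall z δ,
      max t (dist v z) ∈ Icc t δ ∩ φ ⁻¹' Ici a :=
    fun v hv ↦ ⟨⟨le_max_left _ _, max_le htδ hv.2⟩, hv.1⟩
  rcases (Icc t δ ∩ φ ⁻¹' Ici a).eq_empty_or_nonempty with hempty | hne
  · exact .inl (eq_empty_of_forall_notMem fun v hv ↦ (hempty ▸ hmem v hv : _ ∈ (∅ : Set ℝ)))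
  · obtain ⟨s, ⟨hs, has⟩, hgreatest⟩ := hcompact.exists_isGreatest hne
    refine .inr ⟨s, hs, Subset.antisymm (fun v hv ↦ ?_) fun v hv ↦ ⟨?_, ?_⟩⟩
    · exact (le_max_right t _).trans (hgreatest (hmem v hv))
    · exact le_trans has (hφ (mem_Ici.2 (le_max_left _ _)) hs.1 (max_le hs.1 hv))
    · exact closedBall_subset_closedBall hs.2 hv

variable [MeasurableSpace X] [OpensMeasurableSpace X]

lemma setLIntegral_comp_max_dist_le_mul {σ ν : Measure X} {z : X} {t δ : ℝ} (htδ : t ≤ δ)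
    {φ : ℝ → ℝ} (hφ : AntitoneOn φ (Ici t)) (hφc : ContinuousOn φ (Ici t))
    (hφ0 : ∀ s ∈ Ici t, 0 ≤ φ s) {c : ℝ≥0∞} (hc : c ≠ ∞)
    (h : ∀ s ∈ Icc t δ, σ (closedBall z s) ≤ c * ν (closedBall z s)) :
    ∫⁻ v in closedBall z δ, ENNReal.ofReal (φ (max t (dist v z))) ∂σ ≤
      c * ∫⁻ v in closedBall z δ, ENNReal.ofReal (φ (max t (dist v z))) ∂ν := by
  have hmeas : Measurable fun v : X ↦ φ (max t (dist v z)) :=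
    (hφc.comp_continuous (by fun_prop) fun v ↦ le_max_left t (dist v z)).measurable
  have hnonneg : ∀ v : X, 0 ≤ φ (max t (dist v z)) := fun v ↦
    hφ0 _ (mem_Ici.2 (le_max_left _ _))
  rw [lintegral_eq_lintegral_meas_le _ (.of_forall hnonneg) hmeas.aemeasurable,
    lintegral_eq_lintegral_meas_le _ (.of_forall hnonneg) hmeas.aemeasurable,
    ← lintegral_const_mul' _ _ hc]
  refine lintegral_mono fun a ↦ ?_
  have hsuper : MeasurableSet {v : X | a ≤ φ (max t (dist v z))} :=
    measurableSet_le measurable_const hmeas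
  rw [Measure.restrict_apply hsuper, Measure.restrict_apply hsuper]
  rcases superlevel_comp_max_dist_inter_closedBall htδ hφ hφc z with hempty | ⟨s, hs, heq⟩
  · rw [hempty, measure_empty]
    exact zero_le
  · rw [heq]
    exact h s hs

end LayerCake

section Differentiation

variable {X : Type*} [MeasurableSpace X]

/-- The error measure of the approximation of `μ` by `(dμ/dν)(z) • ν` near `z`. It dominates the
difference of the two measures in both directions. -/
noncomputable def lebesgueDefect (μ ν : Measure X) (z : X) : Measure X :=
  ν.withDensity (fun v ↦ ‖(μ.rnDeriv ν v).toReal - (μ.rnDeriv ν z).toReal‖ₑ) + μ.singularPart ν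

variable (μ ν : Measure X)

instance [IsFiniteMeasure μ] [IsFiniteMeasure ν] (z : X) :
    IsFiniteMeasure (lebesgueDefect μ ν z) := by
  have hint : Integrable (fun v ↦ (μ.rnDeriv ν v).toReal - (μ.rnDeriv ν z).toReal) ν :=
    Measure.integrable_toReal_rnDeriv.sub (integrable_const _)
  have := isFiniteMeasure_withDensity hint.2.ne
  unfold lebesgueDefect
  infer_instance

lemma lebesgueDefect_absolutelyContinuous (z : X) : lebesgueDefect μ ν z ≪ ν + μ :=
  Measure.AbsolutelyContinuous.add (withDensity_absolutelyContinuous _ _)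
    (Measure.singularPart_le μ ν).absolutelyContinuous

lemma le_smul_add_lebesgueDefect [SigmaFinite μ] [SigmaFinite ν] (z : X) :
    μ ≤ ENNReal.ofReal (μ.rnDeriv ν z).toReal • ν + lebesgueDefect μ ν z := by
  have hac : ν.withDensity (μ.rnDeriv ν) ≤ ENNReal.ofReal (μ.rnDeriv ν z).toReal • ν +
      ν.withDensity (fun v ↦ ‖(μ.rnDeriv ν v).toReal - (μ.rnDeriv ν z).toReal‖ₑ) := by
    rw [← withDensity_const, ← withDensity_add_left measurable_const]
    refine withDensity_mono ?_
    filter_upwards [ofReal_toReal_ae_eq (Measure.rnDeriv_lt_top μ ν)] with v hv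
    rw [← hv, Pi.add_apply, ← ofReal_norm,
      ← ENNReal.ofReal_add ENNReal.toReal_nonneg (norm_nonneg _)]
    refine ENNReal.ofReal_le_ofReal ?_
    linarith [Real.le_norm_self ((μ.rnDeriv ν v).toReal - (μ.rnDeriv ν z).toReal)]
  calc μ = ν.withDensity (μ.rnDeriv ν) + μ.singularPart ν := by
        rw [add_comm, ← Measure.haveLebesgueDecomposition_add μ ν]
    _ ≤ _ := add_le_add_left hac _
    _ = _ := add_assoc _ _ _

lemma smul_le_add_lebesgueDefect [SigmaFinite μ] (z : X) :
    ENNReal.ofReal (μ.rnDeriv ν z).toReal • ν ≤ μ + lebesgueDefect μ ν z := by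
  calc ENNReal.ofReal (μ.rnDeriv ν z).toReal • ν
      ≤ ν.withDensity (μ.rnDeriv ν) +
        ν.withDensity (fun v ↦ ‖(μ.rnDeriv ν v).toReal - (μ.rnDeriv ν z).toReal‖ₑ) := by
        rw [← withDensity_const, ← withDensity_add_left (Measure.measurable_rnDeriv μ ν)]
        refine withDensity_mono ?_
        filter_upwards [ofReal_toReal_ae_eq (Measure.rnDeriv_lt_top μ ν)] with v hv
        rw [Pi.add_apply, ← ofReal_norm, norm_sub_rev]
        nth_rw 1 [← hv]
        rw [← ENNReal.ofReal_add ENNReal.toReal_nonneg (norm_nonneg _)]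
        refine ENNReal.ofReal_le_ofReal ?_
        linarith [Real.le_norm_self ((μ.rnDeriv ν z).toReal - (μ.rnDeriv ν v).toReal)]
    _ ≤ μ + lebesgueDefect μ ν z :=
        add_le_add (Measure.withDensity_rnDeriv_le μ ν) (Measure.le_add_right le_rfl)

lemma exists_forall_closedBall_le_mul {Y : Type*} [PseudoMetricSpace Y] [MeasurableSpace Y]
    {σ ν : Measure Y} {z : Y}
    (h : Tendsto (fun s ↦ σ (closedBall z s) / ν (closedBall z s)) (𝓝[>] 0) (𝓝 0))
    {c : ℝ≥0} (hc : 0 < c) :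
    ∃ δ ∈ Ioc (0 : ℝ) 1, ∀ s ∈ Ioc 0 δ, σ (closedBall z s) ≤ c * ν (closedBall z s) := by
  have hc' : (0 : ℝ≥0∞) < c := by exact_mod_cast hc
  obtain ⟨δ, hδ, hδs⟩ := mem_nhdsGT_iff_exists_Ioc_subset.1 (ENNReal.tendsto_nhds_zero.1 h c hc')
  refine ⟨min δ 1, ⟨lt_min hδ one_pos, min_le_right _ _⟩, fun s hs ↦ ?_⟩
  exact (ENNReal.div_le_iff_le_mul (.inr ENNReal.coe_ne_top) (.inr hc'.ne')).1
    (hδs ⟨hs.1, hs.2.trans (min_le_left _ _)⟩)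

variable {Y : Type*} [MetricSpace Y] [MeasurableSpace Y] [BorelSpace Y]
  [SecondCountableTopology Y] [HasBesicovitchCovering Y]

lemma ae_tendsto_div_closedBall_of_mutuallySingular {μ ν : Measure Y} [IsLocallyFiniteMeasure μ]
    [IsLocallyFiniteMeasure ν] (h : μ.MutuallySingular ν) :
    ∀ᵐ z ∂ν, Tendsto (fun s ↦ μ (closedBall z s) / ν (closedBall z s)) (𝓝[>] 0) (𝓝 0) := by
  filter_upwards [Besicovitch.ae_tendsto_rnDeriv μ ν,
    Measure.rnDeriv_eq_zero_of_mutuallySingular h .rfl] with z hz hzero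
  rwa [hzero] at hz

lemma ae_tendsto_lebesgueDefect_div_closedBall (μ ν : Measure Y) [IsFiniteMeasure μ]
    [IsFiniteMeasure ν] :
    ∀ᵐ z ∂ν, Tendsto (fun s ↦ lebesgueDefect μ ν z (closedBall z s) / ν (closedBall z s))
      (𝓝[>] 0) (𝓝 0) := by
  filter_upwards [ae_tendsto_div_closedBall_of_mutuallySingular
      (Measure.mutuallySingular_singularPart μ ν),
    (Besicovitch.vitaliFamily ν).ae_tendsto_lintegral_enorm_sub_div_of_integrable
      (Measure.integrable_toReal_rnDeriv (μ := μ))] with z hsing hosc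
  have hsum := (hosc.comp (Besicovitch.tendsto_filterAt ν z)).add hsing
  rw [add_zero] at hsum
  refine hsum.congr fun s ↦ ?_
  rw [lebesgueDefect, Measure.add_apply, withDensity_apply _ measurableSet_closedBall,
    ENNReal.add_div, Function.comp_apply]

end Differentiation

section Kernel

variable {E : Type*} [NormedAddCommGroup E]

/-- The quotient `P_{0,r}(x, v) / P_{0,r}(0, v)` of Poisson kernels in dimension `p`, without its
factor `((r² - |x|²) / r²)^{α/2}`. On the unit sphere it is the Martin kernel without the factor
`(1 - |x|²)^{α/2}`. -/
noncomputable def exteriorKernel (p : ℕ) (x v : E) : ℝ := (‖v‖ / dist x v) ^ p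

/-- The nontangential approach region at the boundary point `z` of the unit ball: the Stolz open
set without its restriction on the distance to the boundary. -/
def stolzRegion (β : ℝ) (z : E) : Set E := {x | ‖x‖ < 1 ∧ dist x z < β * (1 - ‖x‖)}

lemma exteriorKernel_nonneg (p : ℕ) (x v : E) : 0 ≤ exteriorKernel p x v := by
  unfold exteriorKernel
  positivity

@[fun_prop]
lemma measurable_exteriorKernel [MeasurableSpace E] [BorelSpace E] (p : ℕ) (x : E) :
    Measurable (exteriorKernel p x) := by
  unfold exteriorKernel
  fun_prop

lemma norm_sub_norm_le_dist (x v : E) : ‖v‖ - ‖x‖ ≤ dist x v := by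
  rw [dist_comm, dist_eq_norm]
  exact norm_sub_norm_le v x

lemma exteriorKernel_le_of_le_dist (p : ℕ) {x v : E} {d : ℝ} (hd : 0 < d) (hx : ‖x‖ ≤ 1)
    (hv : d ≤ dist x v) : exteriorKernel p x v ≤ (1 + 1 / d) ^ p := by
  have hdist : 0 < dist x v := hd.trans_le hv
  refine pow_le_pow_left₀ (by positivity) ?_ p
  calc ‖v‖ / dist x v ≤ (dist x v + 1) / dist x v := by
        gcongr
        linarith [norm_sub_norm_le_dist x v]
    _ = 1 + 1 / dist x v := by rw [add_div, div_self hdist.ne']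
    _ ≤ 1 + 1 / d := by gcongr

lemma exists_boundedContinuousFunction_eq_exteriorKernel (p : ℕ) {x : E} (hx : ‖x‖ < 1) :
    ∃ g : E →ᵇ ℝ, ∀ v, (1 + ‖x‖) / 2 ≤ ‖v‖ → g v = exteriorKernel p x v := by
  set d := (1 - ‖x‖) / 2 with hd
  have hd0 : 0 < d := half_pos (sub_pos.2 hx)
  have hmax : ∀ v, 0 < max d (dist x v) := fun v ↦ lt_max_of_lt_left hd0
  have hcont : Continuous fun v ↦ (‖v‖ / max d (dist x v)) ^ p :=
    (continuous_norm.div (by fun_prop) fun v ↦ (hmax v).ne').pow p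
  refine ⟨.ofNormedAddCommGroup _ hcont ((1 + 1 / d) ^ p) fun v ↦ ?_, fun v hv ↦ ?_⟩
  · have hv := hmax v
    rw [Real.norm_of_nonneg (by positivity)]
    refine pow_le_pow_left₀ (by positivity) ?_ p
    calc ‖v‖ / max d (dist x v) ≤ (max d (dist x v) + 1) / max d (dist x v) := by
          gcongr
          linarith [norm_sub_norm_le_dist x v, le_max_right d (dist x v)]
      _ = 1 + 1 / max d (dist x v) := by rw [add_div, div_self hv.ne']
      _ ≤ 1 + 1 / d := by
          gcongr
          exact le_max_left _ _
  · have hdist : d ≤ dist x v := by linarith [norm_sub_norm_le_dist x v]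
    simp [exteriorKernel, max_eq_right hdist]

section Stolz

variable {β : ℝ} {x z v : E}

lemma pos_of_mem_stolzRegion (hx : x ∈ stolzRegion β z) : 0 < β :=
  pos_of_mul_pos_left (dist_nonneg.trans_lt hx.2) (sub_nonneg.2 hx.1.le)

lemma max_le_mul_dist_of_mem_stolzRegion (hx : x ∈ stolzRegion β z) (hv : 1 ≤ ‖v‖) :
    max (1 - ‖x‖) (dist v z) ≤ (β + 1) * dist x v := by
  have hdist : 1 - ‖x‖ ≤ dist x v := by linarith [norm_sub_norm_le_dist x v]
  have hβ := pos_of_mem_stolzRegion hx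
  refine max_le (by nlinarith [dist_nonneg (x := x) (y := v)]) ?_
  nlinarith [dist_triangle_left v z x, hx.2]

lemma dist_le_mul_max_of_mem_stolzRegion (hx : x ∈ stolzRegion β z) :
    dist x v ≤ (β + 1) * max (1 - ‖x‖) (dist v z) := by
  have hβ := pos_of_mem_stolzRegion hx
  calc dist x v ≤ dist x z + dist v z := dist_triangle_right x v z
    _ ≤ β * (1 - ‖x‖) + dist v z := by gcongr; exact hx.2.le
    _ ≤ β * max (1 - ‖x‖) (dist v z) + max (1 - ‖x‖) (dist v z) := by
        gcongr <;> simp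
    _ = (β + 1) * max (1 - ‖x‖) (dist v z) := by ring

lemma inv_max_pow_le_mul_exteriorKernel (p : ℕ) (hx : x ∈ stolzRegion β z) (hv : 1 ≤ ‖v‖) :
    (max (1 - ‖x‖) (dist v z) ^ p)⁻¹ ≤ (β + 1) ^ p * exteriorKernel p x v := by
  have hdist : 0 < dist x v := by linarith [norm_sub_norm_le_dist x v, hx.1]
  have hmax : 0 < max (1 - ‖x‖) (dist v z) := lt_max_of_lt_left (sub_pos.2 hx.1)
  have hβ := pos_of_mem_stolzRegion hx
  rw [exteriorKernel, ← inv_pow, ← mul_pow]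
  refine pow_le_pow_left₀ (by positivity) ?_ p
  calc (max (1 - ‖x‖) (dist v z))⁻¹ ≤ (dist x v / (β + 1))⁻¹ := by
        gcongr
        rw [div_le_iff₀ (by positivity), mul_comm]
        exact dist_le_mul_max_of_mem_stolzRegion hx
    _ = (β + 1) * (1 / dist x v) := by rw [inv_div, mul_one_div]
    _ ≤ (β + 1) * (‖v‖ / dist x v) := by gcongr

lemma exteriorKernel_le_mul_inv_max_pow (p : ℕ) (hx : x ∈ stolzRegion β z) (hv : 1 ≤ ‖v‖) :
    exteriorKernel p x v ≤ (‖v‖ * (β + 1)) ^ p * (max (1 - ‖x‖) (dist v z) ^ p)⁻¹ := by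
  have hdist : 0 < dist x v := by linarith [norm_sub_norm_le_dist x v, hx.1]
  have hmax : 0 < max (1 - ‖x‖) (dist v z) := lt_max_of_lt_left (sub_pos.2 hx.1)
  rw [exteriorKernel, ← inv_pow, ← mul_pow]
  refine pow_le_pow_left₀ (by positivity) ?_ p
  rw [mul_assoc, div_eq_mul_inv]
  gcongr
  rw [← div_eq_mul_inv, le_div_iff₀ hmax, inv_mul_le_iff₀ hdist, mul_comm]
  exact max_le_mul_dist_of_mem_stolzRegion hx hv

lemma tendsto_one_sub_norm_stolzRegion (β : ℝ) (hz : ‖z‖ = 1) :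
    Tendsto (fun x : E ↦ 1 - ‖x‖) (𝓝[stolzRegion β z] z) (𝓝[>] 0) := by
  refine tendsto_nhdsWithin_of_tendsto_nhds_of_eventually_within _ ?_ ?_
  · have hcont : Continuous fun x : E ↦ 1 - ‖x‖ := by fun_prop
    simpa only [hz, sub_self] using (hcont.tendsto z).mono_left nhdsWithin_le_nhds
  · filter_upwards [self_mem_nhdsWithin] with x hx using sub_pos.2 hx.1

end Stolz

end Kernel

section Potential

variable {E : Type*} [NormedAddCommGroup E] [MeasurableSpace E]

/-- The potential of `μ` with respect to `exteriorKernel`, with values in `[0, ∞]`. -/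
noncomputable def exteriorPotential (p : ℕ) (μ : Measure E) (x : E) : ℝ≥0∞ :=
  ∫⁻ v, ENNReal.ofReal (exteriorKernel p x v) ∂μ

variable {p : ℕ} {μ σ ν : Measure E} {β δ : ℝ} {x z : E}

lemma exteriorPotential_ne_top [IsFiniteMeasure μ] (hμ : ∀ᵐ v ∂μ, 1 ≤ ‖v‖) (hx : ‖x‖ < 1) :
    exteriorPotential p μ x ≠ ∞ := by
  have hbound : exteriorPotential p μ x ≤
      ∫⁻ _, ENNReal.ofReal ((1 + 1 / (1 - ‖x‖)) ^ p) ∂μ := by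
    refine lintegral_mono_ae ?_
    filter_upwards [hμ] with v hv
    refine ENNReal.ofReal_le_ofReal (exteriorKernel_le_of_le_dist p (sub_pos.2 hx) hx.le ?_)
    linarith [norm_sub_norm_le_dist x v]
  rw [lintegral_const] at hbound
  exact ne_top_of_le_ne_top (by finiteness) hbound

lemma setLIntegral_inv_max_pow_le (hν : ∀ᵐ v ∂ν, 1 ≤ ‖v‖) (hx : x ∈ stolzRegion β z) (s : Set E) :
    ∫⁻ v in s, ENNReal.ofReal (max (1 - ‖x‖) (dist v z) ^ p)⁻¹ ∂ν ≤
      ENNReal.ofReal ((β + 1) ^ p) * exteriorPotential p ν x := by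
  have hβ := pos_of_mem_stolzRegion hx
  refine (setLIntegral_le_lintegral s _).trans ?_
  rw [exteriorPotential, ← lintegral_const_mul' _ _ ENNReal.ofReal_ne_top]
  refine lintegral_mono_ae ?_
  filter_upwards [hν] with v hv
  rw [← ENNReal.ofReal_mul (by positivity)]
  exact ENNReal.ofReal_le_ofReal (inv_max_pow_le_mul_exteriorKernel p hx hv)

lemma exteriorPotential_le_add_lebesgueDefect [SigmaFinite μ] [SigmaFinite ν] (p : ℕ) (x z : E) :
    exteriorPotential p μ x ≤ ENNReal.ofReal (μ.rnDeriv ν z).toReal * exteriorPotential p ν x +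
      exteriorPotential p (lebesgueDefect μ ν z) x := by
  refine (lintegral_mono' (le_smul_add_lebesgueDefect μ ν z) le_rfl).trans_eq ?_
  rw [lintegral_add_measure, lintegral_smul_measure, smul_eq_mul]
  rfl

lemma mul_exteriorPotential_le_add_lebesgueDefect [SigmaFinite μ] (p : ℕ) (x z : E) :
    ENNReal.ofReal (μ.rnDeriv ν z).toReal * exteriorPotential p ν x ≤
      exteriorPotential p μ x + exteriorPotential p (lebesgueDefect μ ν z) x := by
  have h := lintegral_mono' (smul_le_add_lebesgueDefect μ ν z)
    (le_refl fun v ↦ ENNReal.ofReal (exteriorKernel p x v))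
  rwa [lintegral_add_measure, lintegral_smul_measure, smul_eq_mul] at h

variable [BorelSpace E]

lemma integral_exteriorKernel (p : ℕ) (μ : Measure E) (x : E) :
    ∫ v, exteriorKernel p x v ∂μ = (exteriorPotential p μ x).toReal :=
  integral_eq_lintegral_of_nonneg_ae (.of_forall (exteriorKernel_nonneg p x))
    (measurable_exteriorKernel p x).aestronglyMeasurable

lemma measure_closedBall_le_mul_exteriorPotential (hν : ∀ᵐ v ∂ν, 1 ≤ ‖v‖)
    (hx : x ∈ stolzRegion β z) :
    ν (closedBall z (1 - ‖x‖)) ≤ ENNReal.ofReal ((β + 1) ^ p) * exteriorPotential p ν x *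
      ENNReal.ofReal ((1 - ‖x‖) ^ p) := by
  have ht : 0 < (1 - ‖x‖) ^ p := pow_pos (sub_pos.2 hx.1) p
  have hconst : ∫⁻ v in closedBall z (1 - ‖x‖),
      ENNReal.ofReal (max (1 - ‖x‖) (dist v z) ^ p)⁻¹ ∂ν =
        ν (closedBall z (1 - ‖x‖)) / ENNReal.ofReal ((1 - ‖x‖) ^ p) := by
    rw [setLIntegral_congr_fun (g := fun _ ↦ ENNReal.ofReal ((1 - ‖x‖) ^ p)⁻¹)
      measurableSet_closedBall fun v hv ↦ by simp only [max_eq_left (mem_closedBall.1 hv)],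
      setLIntegral_const, ENNReal.ofReal_inv_of_pos ht, div_eq_mul_inv, mul_comm]
  rw [← ENNReal.div_le_iff (by simpa using ht) ENNReal.ofReal_ne_top, ← hconst]
  exact setLIntegral_inv_max_pow_le hν hx _

lemma setLIntegral_exteriorKernel_closedBall_le (hσ : ∀ᵐ v ∂σ, 1 ≤ ‖v‖) (hz : ‖z‖ = 1)
    (hδ : δ ≤ 1) (hx : x ∈ stolzRegion β z) :
    ∫⁻ v in closedBall z δ, ENNReal.ofReal (exteriorKernel p x v) ∂σ ≤
      ENNReal.ofReal ((2 * (β + 1)) ^ p) *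
        ∫⁻ v in closedBall z δ, ENNReal.ofReal (max (1 - ‖x‖) (dist v z) ^ p)⁻¹ ∂σ := by
  have hβ := pos_of_mem_stolzRegion hx
  rw [← lintegral_const_mul' _ _ ENNReal.ofReal_ne_top]
  refine lintegral_mono_ae ?_
  filter_upwards [ae_restrict_mem measurableSet_closedBall, ae_restrict_of_ae hσ] with v hvz hv
  have hv2 : ‖v‖ ≤ 2 := by
    linarith [norm_sub_norm_le_dist z v, dist_comm z v, mem_closedBall.1 hvz]
  rw [← ENNReal.ofReal_mul (by positivity)]
  refine ENNReal.ofReal_le_ofReal ((exteriorKernel_le_mul_inv_max_pow p hx hv).trans ?_)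
  have hmax : 0 < max (1 - ‖x‖) (dist v z) := lt_max_of_lt_left (sub_pos.2 hx.1)
  gcongr

lemma setLIntegral_exteriorKernel_closedBall_le_mul (hσ : ∀ᵐ v ∂σ, 1 ≤ ‖v‖)
    (hν : ∀ᵐ v ∂ν, 1 ≤ ‖v‖) (hz : ‖z‖ = 1) (hδ : δ ≤ 1) (hx : x ∈ stolzRegion β z)
    (hxδ : 1 - ‖x‖ ≤ δ) {c : ℝ≥0∞} (hc : c ≠ ∞)
    (h : ∀ s ∈ Icc (1 - ‖x‖) δ, σ (closedBall z s) ≤ c * ν (closedBall z s)) :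
    ∫⁻ v in closedBall z δ, ENNReal.ofReal (exteriorKernel p x v) ∂σ ≤
      c * (ENNReal.ofReal ((2 * (β + 1)) ^ p) * ENNReal.ofReal ((β + 1) ^ p)) *
        exteriorPotential p ν x := by
  have hpos : ∀ s ∈ Ici (1 - ‖x‖), 0 < s := fun s hs ↦ (sub_pos.2 hx.1).trans_le hs
  have hanti : AntitoneOn (fun s : ℝ ↦ (s ^ p)⁻¹) (Ici (1 - ‖x‖)) := fun a ha b _ hab ↦
    inv_anti₀ (pow_pos (hpos a ha) p) (pow_le_pow_left₀ (hpos a ha).le hab p)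
  have hcont : ContinuousOn (fun s : ℝ ↦ (s ^ p)⁻¹) (Ici (1 - ‖x‖)) :=
    (continuous_pow p).continuousOn.inv₀ fun s hs ↦ (pow_pos (hpos s hs) p).ne'
  have hlayer := setLIntegral_comp_max_dist_le_mul hxδ hanti hcont
    (fun s hs ↦ (inv_pos.2 (pow_pos (hpos s hs) p)).le) hc h
  calc _ ≤ ENNReal.ofReal ((2 * (β + 1)) ^ p) * _ :=
        setLIntegral_exteriorKernel_closedBall_le hσ hz hδ hx
    _ ≤ ENNReal.ofReal ((2 * (β + 1)) ^ p) *
        (c * (ENNReal.ofReal ((β + 1) ^ p) * exteriorPotential p ν x)) := by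
        gcongr
        exact hlayer.trans (by gcongr; exact setLIntegral_inv_max_pow_le hν hx _)
    _ = _ := by ring

lemma setLIntegral_exteriorKernel_compl_closedBall_le (hδ : 0 < δ) (hx : ‖x‖ ≤ 1)
    (hxz : dist x z ≤ δ / 2) :
    ∫⁻ v in (closedBall z δ)ᶜ, ENNReal.ofReal (exteriorKernel p x v) ∂σ ≤
      ENNReal.ofReal ((1 + 1 / (δ / 2)) ^ p) * σ univ := by
  calc _ ≤ ∫⁻ _ in (closedBall z δ)ᶜ, ENNReal.ofReal ((1 + 1 / (δ / 2)) ^ p) ∂σ := by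
        refine setLIntegral_mono' measurableSet_closedBall.compl fun v hv ↦
          ENNReal.ofReal_le_ofReal (exteriorKernel_le_of_le_dist p (half_pos hδ) hx ?_)
        have hv' : δ < dist v z := by simpa using hv
        linarith [dist_triangle_left v z x]
    _ ≤ _ := by
        rw [setLIntegral_const]
        gcongr
        exact subset_univ _

end Potential

section NontangentialLimit

lemma tendsto_div_of_le_add {ι : Type*} {l : Filter ι} {a b s : ι → ℝ≥0∞} {L : ℝ≥0∞}
    (hL : L ≠ ∞) (hb0 : ∀ᶠ i in l, b i ≠ 0) (hbtop : ∀ᶠ i in l, b i ≠ ∞)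
    (hle : ∀ i, a i ≤ L * b i + s i) (hge : ∀ i, L * b i ≤ a i + s i)
    (hs : Tendsto (fun i ↦ s i / b i) l (𝓝 0)) : Tendsto (fun i ↦ a i / b i) l (𝓝 L) := by
  have hlower : Tendsto (fun i ↦ L - s i / b i) l (𝓝 L) := by
    simpa using ENNReal.Tendsto.sub (tendsto_const_nhds (x := L)) hs (.inl hL)
  have hupper : Tendsto (fun i ↦ L + s i / b i) l (𝓝 L) := by
    simpa using hs.const_add L
  refine tendsto_of_tendsto_of_tendsto_of_le_of_le' hlower hupper ?_ ?_
  · filter_upwards [hb0, hbtop] with i hi0 hitop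
    rw [tsub_le_iff_right, ← ENNReal.add_div, ENNReal.le_div_iff_mul_le (.inl hi0) (.inl hitop)]
    exact hge i
  · filter_upwards [hb0, hbtop] with i hi0 hitop
    rw [ENNReal.div_le_iff hi0 hitop, add_mul, ENNReal.div_mul_cancel hi0 hitop]
    exact hle i

section

variable {E : Type*} [NormedAddCommGroup E] [MeasurableSpace E] [BorelSpace E] {p : ℕ}
  {σ ν : Measure E} {β : ℝ} {z : E}

lemma tendsto_exteriorPotential_div_exteriorPotential_zero [IsFiniteMeasure σ]
    (hσ : ∀ᵐ v ∂σ, 1 ≤ ‖v‖) (hν : ∀ᵐ v ∂ν, 1 ≤ ‖v‖) (hz : ‖z‖ = 1)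
    (hσν : Tendsto (fun s ↦ σ (closedBall z s) / ν (closedBall z s)) (𝓝[>] 0) (𝓝 0))
    (htop : Tendsto (exteriorPotential p ν) (𝓝[stolzRegion β z] z) (𝓝 ∞)) :
    Tendsto (fun x ↦ exteriorPotential p σ x / exteriorPotential p ν x)
      (𝓝[stolzRegion β z] z) (𝓝 0) := by
  refine ENNReal.tendsto_nhds_zero.2 fun ε hε ↦ ?_
  have hε2 : 0 < ε / 2 := ENNReal.half_pos hε.ne'
  obtain ⟨c, hc0, hc⟩ := ENNReal.exists_nnreal_pos_mul_lt
    (a := ENNReal.ofReal ((2 * (β + 1)) ^ p) * ENNReal.ofReal ((β + 1) ^ p))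
    (by finiteness) hε2.ne'
  obtain ⟨δ, ⟨hδ0, hδ1⟩, hball⟩ := exists_forall_closedBall_le_mul hσν hc0
  have hfar : ∀ᶠ x in 𝓝[stolzRegion β z] z,
      ENNReal.ofReal ((1 + 1 / (δ / 2)) ^ p) * σ univ / exteriorPotential p ν x ≤ ε / 2 := by
    have hlim := ENNReal.Tendsto.const_div (a := ENNReal.ofReal ((1 + 1 / (δ / 2)) ^ p) * σ univ)
      htop (.inr (by finiteness))
    rw [ENNReal.div_top] at hlim
    exact ENNReal.tendsto_nhds_zero.1 hlim _ hε2
  filter_upwards [hfar, self_mem_nhdsWithin,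
    mem_nhdsWithin_of_mem_nhds (closedBall_mem_nhds z (half_pos hδ0))] with x hxfar hx hxz
  rw [mem_closedBall] at hxz
  have hxδ : 1 - ‖x‖ ≤ δ := by linarith [norm_sub_norm_le_dist x z]
  calc exteriorPotential p σ x / exteriorPotential p ν x
      = (∫⁻ v in closedBall z δ, ENNReal.ofReal (exteriorKernel p x v) ∂σ) /
            exteriorPotential p ν x +
          (∫⁻ v in (closedBall z δ)ᶜ, ENNReal.ofReal (exteriorKernel p x v) ∂σ) /
            exteriorPotential p ν x := by
        rw [← ENNReal.add_div, lintegral_add_compl _ measurableSet_closedBall, exteriorPotential]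
    _ ≤ ε / 2 + ε / 2 := by
        refine add_le_add (ENNReal.div_le_of_le_mul ?_) (le_trans ?_ hxfar)
        · refine (setLIntegral_exteriorKernel_closedBall_le_mul hσ hν hz hδ1 hx hxδ
            ENNReal.coe_ne_top fun s hs ↦ hball s ⟨(sub_pos.2 hx.1).trans_le hs.1, hs.2⟩).trans ?_
          gcongr
        · gcongr
          exact setLIntegral_exteriorKernel_compl_closedBall_le hδ0 hx.1.le hxz
    _ = ε := ENNReal.add_halves ε

end

variable {E : Type*} [NormedAddCommGroup E] [NormedSpace ℝ E] [FiniteDimensional ℝ E]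
  [MeasurableSpace E] [BorelSpace E] {β : ℝ} {z : E}

lemma measure_closedBall_div_addHaar_le_mul_exteriorPotential {μ ν : Measure E}
    [μ.IsAddHaarMeasure] (hν : ∀ᵐ v ∂ν, 1 ≤ ‖v‖) {x : E} (hx : x ∈ stolzRegion β z) :
    ν (closedBall z (1 - ‖x‖)) / μ (closedBall z (1 - ‖x‖)) ≤
      ENNReal.ofReal ((β + 1) ^ finrank ℝ E) / μ (ball 0 1) *
        exteriorPotential (finrank ℝ E) ν x := by
  have hvol : ENNReal.ofReal ((β + 1) ^ finrank ℝ E) / μ (ball 0 1) * μ (ball 0 1) =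
      ENNReal.ofReal ((β + 1) ^ finrank ℝ E) :=
    ENNReal.div_mul_cancel (measure_ball_pos μ 0 one_pos).ne' measure_ball_lt_top.ne
  refine ENNReal.div_le_of_le_mul ?_
  rw [Measure.addHaar_closedBall μ z (sub_nonneg.2 hx.1.le)]
  calc _ ≤ _ := measure_closedBall_le_mul_exteriorPotential hν hx
    _ = _ := by
        nth_rw 1 [← hvol]
        ring

lemma tendsto_exteriorPotential_nhds_top {μ ν : Measure E} [μ.IsAddHaarMeasure]
    (hν : ∀ᵐ v ∂ν, 1 ≤ ‖v‖) (hz : ‖z‖ = 1)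
    (h : Tendsto (fun s ↦ μ (closedBall z s) / ν (closedBall z s)) (𝓝[>] 0) (𝓝 0)) :
    Tendsto (exteriorPotential (finrank ℝ E) ν) (𝓝[stolzRegion β z] z) (𝓝 ∞) := by
  have hC : ENNReal.ofReal ((β + 1) ^ finrank ℝ E) / μ (ball 0 1) ≠ ∞ :=
    ENNReal.div_ne_top ENNReal.ofReal_ne_top (measure_ball_pos μ 0 one_pos).ne'
  have hinv : Tendsto (fun s ↦ ν (closedBall z s) / μ (closedBall z s)) (𝓝[>] 0) (𝓝 ∞) := by
    rw [← ENNReal.inv_zero]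
    refine (tendsto_inv_iff.2 h).congr' ?_
    filter_upwards [self_mem_nhdsWithin] with s hs
    exact ENNReal.inv_div (.inr measure_closedBall_lt_top.ne)
      (.inr (measure_closedBall_pos μ z hs).ne')
  have hlim := ENNReal.Tendsto.div_const (hinv.comp (tendsto_one_sub_norm_stolzRegion β hz))
    (b := ENNReal.ofReal ((β + 1) ^ finrank ℝ E) / μ (ball 0 1)) (.inl ENNReal.top_ne_zero)
  rw [ENNReal.top_div_of_ne_top hC] at hlim
  refine tendsto_nhds_top_mono hlim ?_
  filter_upwards [self_mem_nhdsWithin] with x hx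
  exact ENNReal.div_le_of_le_mul' (measure_closedBall_div_addHaar_le_mul_exteriorPotential hν hx)

variable {P ν : Measure E}

lemma ae_tendsto_exteriorPotential_div [IsFiniteMeasure P] [IsFiniteMeasure ν]
    (hP : ∀ᵐ v ∂P, 1 ≤ ‖v‖) (hν : ∀ᵐ v ∂ν, ‖v‖ = 1) :
    ∀ᵐ z ∂ν, ∀ β, Tendsto
      (fun x ↦ exteriorPotential (finrank ℝ E) P x / exteriorPotential (finrank ℝ E) ν x)
      (𝓝[stolzRegion β z] z) (𝓝 (ENNReal.ofReal (P.rnDeriv ν z).toReal)) := by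
  have hν1 : ∀ᵐ v ∂ν, 1 ≤ ‖v‖ := hν.mono fun v hv ↦ hv.ge
  have hsing : (Measure.addHaar : Measure E).MutuallySingular ν := by
    refine ⟨sphere 0 1, isClosed_sphere.measurableSet,
      Measure.addHaar_sphere_of_ne_zero _ _ one_ne_zero, ?_⟩
    rw [ae_iff] at hν
    convert hν using 2
    ext v
    simp
  filter_upwards [hν, ae_tendsto_div_closedBall_of_mutuallySingular hsing,
    ae_tendsto_lebesgueDefect_div_closedBall P ν] with z hz hhaar hdefect β
  have htop := tendsto_exteriorPotential_nhds_top (β := β) hν1 hz hhaar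
  have hdefect1 : ∀ᵐ v ∂lebesgueDefect P ν z, 1 ≤ ‖v‖ :=
    (lebesgueDefect_absolutelyContinuous P ν z).ae_le (ae_add_measure_iff.2 ⟨hν1, hP⟩)
  refine tendsto_div_of_le_add ENNReal.ofReal_ne_top
    (htop.eventually (eventually_ne_nhds ENNReal.top_ne_zero)) ?_
    (fun x ↦ exteriorPotential_le_add_lebesgueDefect _ x z)
    (fun x ↦ mul_exteriorPotential_le_add_lebesgueDefect _ x z)
    (tendsto_exteriorPotential_div_exteriorPotential_zero hdefect1 hν1 hz hdefect htop)
  filter_upwards [self_mem_nhdsWithin] with x hx using exteriorPotential_ne_top hν1 hx.1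

lemma ae_tendsto_integral_exteriorKernel_div [IsFiniteMeasure P] [IsFiniteMeasure ν]
    (hP : ∀ᵐ v ∂P, 1 ≤ ‖v‖) (hν : ∀ᵐ v ∂ν, ‖v‖ = 1) :
    ∀ᵐ z ∂ν, ∀ β, Tendsto (fun x ↦ (∫ v, exteriorKernel (finrank ℝ E) x v ∂P) /
      ∫ v, exteriorKernel (finrank ℝ E) x v ∂ν)
      (𝓝[stolzRegion β z] z) (𝓝 (P.rnDeriv ν z).toReal) := by
  filter_upwards [ae_tendsto_exteriorPotential_div hP hν] with z hz β
  have hreal := (ENNReal.tendsto_toReal ENNReal.ofReal_ne_top).comp (hz β)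
  rw [ENNReal.toReal_ofReal ENNReal.toReal_nonneg] at hreal
  refine hreal.congr fun x ↦ ?_
  rw [Function.comp_apply, ENNReal.toReal_div, integral_exteriorKernel, integral_exteriorKernel]

end NontangentialLimit

section WeakLimit

lemma tendsto_measure_compl_closedBall_add {X : Type*} [PseudoMetricSpace X] [MeasurableSpace X]
    [OpensMeasurableSpace X] (T : Measure X) [IsFiniteMeasure T] (a : X) (R : ℝ) :
    Tendsto (fun k : ℕ ↦ T (closedBall a (R + k))ᶜ) atTop (𝓝 0) := by
  have hanti : Antitone fun k : ℕ ↦ (closedBall a (R + k))ᶜ := fun j k hjk ↦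
    compl_subset_compl.2 (closedBall_subset_closedBall (by gcongr))
  have hinter : ⋂ k : ℕ, (closedBall a (R + k))ᶜ = ∅ := by
    rw [← compl_iUnion, compl_empty_iff, eq_univ_iff_forall]
    intro v
    obtain ⟨k, hk⟩ := exists_nat_ge (dist v a - R)
    exact mem_iUnion.2 ⟨k, mem_closedBall.2 (by linarith)⟩
  have h := tendsto_measure_iInter_atTop (μ := T)
    (fun k ↦ measurableSet_closedBall.compl.nullMeasurableSet) hanti ⟨0, measure_ne_top _ _⟩
  rwa [hinter, measure_empty] at h

lemma exists_ultrafilter_tendsto_of_restrict_compl_closedBall_le {X ι : Type*} [MetricSpace X]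
    [ProperSpace X] [MeasurableSpace X] [BorelSpace X] {l : Filter ι} [l.NeBot]
    {m : ι → FiniteMeasure X} {C : ℝ≥0} (hmass : ∀ i, (m i).mass ≤ C) {T : Measure X}
    [IsFiniteMeasure T] {a : X} {R : ℝ}
    (htail : ∀ i, (m i : Measure X).restrict (closedBall a R)ᶜ ≤ T) :
    ∃ U : Ultrafilter ι, ↑U ≤ l ∧ ∃ Q : FiniteMeasure X, Tendsto m U (𝓝 Q) := by
  let K (k : ℕ) : Set X := closedBall a (R + k)
  have hK : Tendsto (fun k ↦ (T (K k)ᶜ).toNNReal) atTop (𝓝 0) :=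
    (ENNReal.tendsto_toNNReal ENNReal.zero_ne_top).comp (tendsto_measure_compl_closedBall_add T a R)
  have hcompact := isCompact_setOfPred_finiteMeasure_mass_le_compl_isCompact_le (K := K) C hK
    (fun k ↦ isCompact_closedBall a _) (.inl inferInstance)
  have hmem : ∀ i k, m i (K k)ᶜ ≤ (T (K k)ᶜ).toNNReal := by
    intro i k
    have hsub : (K k)ᶜ ⊆ (closedBall a R)ᶜ :=
      compl_subset_compl.2 (closedBall_subset_closedBall (by simp))
    refine ENNReal.toNNReal_mono (measure_ne_top _ _) ?_
    rw [← Measure.restrict_eq_self _ hsub]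
    exact htail i _
  obtain ⟨Q, -, hQ⟩ := hcompact.ultrafilter_le_nhds ((Ultrafilter.of l).map m)
    (le_principal_iff.2 (Filter.mem_map.2 (univ_mem' fun i ↦ ⟨hmass i, hmem i⟩)))
  exact ⟨Ultrafilter.of l, Ultrafilter.of_le l, Q, hQ⟩

variable {E ι : Type*} [NormedAddCommGroup E] [MeasurableSpace E] [BorelSpace E] {l : Filter ι}
  {m : ι → FiniteMeasure E} {Q : FiniteMeasure E}

lemma ae_le_norm_of_tendsto [l.NeBot] (hQ : Tendsto m l (𝓝 Q)) {s : ℝ}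
    (hm : ∀ᶠ i in l, ∀ᵐ v ∂(m i : Measure E), s ≤ ‖v‖) : ∀ᵐ v ∂(Q : Measure E), s ≤ ‖v‖ := by
  let g : E →ᵇ ℝ := .ofNormedAddCommGroup (fun v ↦ max (s - ‖v‖) 0) (by fun_prop) |s| fun v ↦ by
    rw [Real.norm_of_nonneg (le_max_right _ _)]
    exact max_le (by linarith [norm_nonneg v, le_abs_self s]) (abs_nonneg s)
  have hg : ∀ v, g v = 0 ↔ s ≤ ‖v‖ := fun v ↦ max_eq_right_iff.trans sub_nonpos
  have hint : ∫ v, g v ∂(Q : Measure E) = 0 := by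
    refine tendsto_nhds_unique (FiniteMeasure.tendsto_iff_forall_integral_tendsto.1 hQ g)
      (tendsto_const_nhds.congr' ?_)
    filter_upwards [hm] with i hi
    exact (integral_eq_zero_of_ae (hi.mono fun v hv ↦ (hg v).2 hv)).symm
  filter_upwards [(integral_eq_zero_iff_of_nonneg (fun v ↦ le_max_right _ _)
    (g.integrable _)).1 hint] with v hv using (hg v).1 hv

lemma tendsto_integral_exteriorKernel (hQ : Tendsto m l (𝓝 Q)) {p : ℕ} {x : E} (hx : ‖x‖ < 1)
    (hQ1 : ∀ᵐ v ∂(Q : Measure E), 1 ≤ ‖v‖)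
    (hm : ∀ᶠ i in l, ∀ᵐ v ∂(m i : Measure E), (1 + ‖x‖) / 2 ≤ ‖v‖) :
    Tendsto (fun i ↦ ∫ v, exteriorKernel p x v ∂(m i : Measure E)) l
      (𝓝 (∫ v, exteriorKernel p x v ∂(Q : Measure E))) := by
  obtain ⟨g, hg⟩ := exists_boundedContinuousFunction_eq_exteriorKernel p hx
  have hgQ : ∫ v, g v ∂(Q : Measure E) = ∫ v, exteriorKernel p x v ∂(Q : Measure E) :=
    integral_congr_ae (hQ1.mono fun v hv ↦ hg v (by linarith))
  rw [← hgQ]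
  refine (FiniteMeasure.tendsto_iff_forall_integral_tendsto.1 hQ g).congr' ?_
  filter_upwards [hm] with i hi using integral_congr_ae (hi.mono hg)

end WeakLimit

section StableHarmonic

variable {n : ℕ} {α r : ℝ}

/-- The normalizing constant `C(n, α)` of the stable Poisson kernel. -/
noncomputable def stablePoissonConst (n : ℕ) (α : ℝ) : ℝ :=
  Real.Gamma (n / 2) * Real.pi ^ (-(n : ℝ) / 2 - 1) * Real.sin (Real.pi * α / 2)

lemma stablePoissonConst_nonneg (n : ℕ) (hα : α ∈ Icc (0 : ℝ) 2) : 0 ≤ stablePoissonConst n α := by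
  have hsin : 0 ≤ Real.sin (Real.pi * α / 2) :=
    Real.sin_nonneg_of_nonneg_of_le_pi (by have := hα.1; positivity)
      (by nlinarith [hα.2, Real.pi_pos])
  unfold stablePoissonConst
  positivity

lemma stablePoissonKernel_zero_zero (v : EuclideanSpace ℝ (Fin n)) :
    stablePoissonKernel n α 0 r 0 v =
      stablePoissonConst n α * (r ^ 2 / (‖v‖ ^ 2 - r ^ 2)) ^ (α / 2) * ‖v‖ ^ (-(n : ℝ)) := by
  simp [stablePoissonKernel, stablePoissonConst]

lemma stablePoissonKernel_eq_mul_exteriorKernel (hr : 0 < r) {x v : EuclideanSpace ℝ (Fin n)}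
    (hx : ‖x‖ < r) (hv : r < ‖v‖) :
    stablePoissonKernel n α 0 r x v = ((r ^ 2 - ‖x‖ ^ 2) / r ^ 2) ^ (α / 2) *
      (stablePoissonKernel n α 0 r 0 v * exteriorKernel n x v) := by
  have hv0 : 0 < ‖v‖ := hr.trans hv
  have hxr : 0 ≤ r ^ 2 - ‖x‖ ^ 2 := by nlinarith [norm_nonneg x]
  have hvr : 0 < ‖v‖ ^ 2 - r ^ 2 := by nlinarith
  have hfactor : (r ^ 2 - ‖x‖ ^ 2) / (‖v‖ ^ 2 - r ^ 2) =
      ((r ^ 2 - ‖x‖ ^ 2) / r ^ 2) * (r ^ 2 / (‖v‖ ^ 2 - r ^ 2)) := by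
    field_simp
  rw [stablePoissonKernel_zero_zero, stablePoissonKernel, ← stablePoissonConst, exteriorKernel,
    dist_zero_right, dist_zero_right, hfactor, Real.mul_rpow (by positivity) (by positivity),
    Real.rpow_neg dist_nonneg, Real.rpow_neg hv0.le, Real.rpow_natCast, Real.rpow_natCast, div_pow]
  field_simp

lemma stablePoissonKernel_zero_nonneg (hα : α ∈ Icc (0 : ℝ) 2) (hr : 0 ≤ r)
    {v : EuclideanSpace ℝ (Fin n)} (hv : r < ‖v‖) : 0 ≤ stablePoissonKernel n α 0 r 0 v := by
  have hvr : 0 < ‖v‖ ^ 2 - r ^ 2 := by nlinarith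
  have hC := stablePoissonConst_nonneg n hα
  rw [stablePoissonKernel_zero_zero]
  positivity

lemma stablePoissonKernel_zero_le (hα : α ∈ Icc (0 : ℝ) 2) (hr : 0 ≤ r) (hr1 : r < 1)
    {v : EuclideanSpace ℝ (Fin n)} (hv : 2 ≤ ‖v‖) :
    stablePoissonKernel n α 0 r 0 v ≤
      stablePoissonConst n α * 2 ^ (n + α) * (1 + ‖v‖) ^ (-(n : ℝ) - α) := by
  have hC := stablePoissonConst_nonneg n hα
  have hhalf : 0 < (1 + ‖v‖) / 2 := by positivity
  have hvr : ((1 + ‖v‖) / 2) ^ 2 ≤ ‖v‖ ^ 2 - r ^ 2 := by nlinarith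
  have hbase : (r ^ 2 / (‖v‖ ^ 2 - r ^ 2)) ^ (α / 2) ≤ ((1 + ‖v‖) / 2) ^ (-α) := by
    calc (r ^ 2 / (‖v‖ ^ 2 - r ^ 2)) ^ (α / 2) ≤ (1 / ((1 + ‖v‖) / 2) ^ 2) ^ (α / 2) := by
          have hvr0 := (pow_pos hhalf 2).trans_le hvr
          have hα0 := hα.1
          gcongr
          exact pow_le_one₀ hr hr1.le
      _ = ((1 + ‖v‖) / 2) ^ (-α) := by
          rw [one_div, ← Real.rpow_natCast, ← Real.rpow_neg hhalf.le, ← Real.rpow_mul hhalf.le]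
          congr 1
          push_cast
          ring
  have hpow : ‖v‖ ^ (-(n : ℝ)) ≤ ((1 + ‖v‖) / 2) ^ (-(n : ℝ)) :=
    Real.rpow_le_rpow_of_nonpos hhalf (by linarith) (by simp)
  calc stablePoissonKernel n α 0 r 0 v
      ≤ stablePoissonConst n α * ((1 + ‖v‖) / 2) ^ (-α) * ((1 + ‖v‖) / 2) ^ (-(n : ℝ)) := by
        rw [stablePoissonKernel_zero_zero]
        gcongr
    _ = stablePoissonConst n α * ((1 + ‖v‖) / 2) ^ (-(n : ℝ) - α) := by
        rw [mul_assoc, ← Real.rpow_add hhalf, neg_add_eq_sub, neg_sub_comm]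
    _ = _ := by
        rw [Real.div_rpow (by positivity) two_pos.le, div_eq_mul_inv, ← Real.rpow_neg two_pos.le,
          neg_sub_comm, neg_sub, sub_neg_eq_add]
        ring

@[fun_prop]
lemma measurable_stablePoissonKernel (x₀ x : EuclideanSpace ℝ (Fin n)) :
    Measurable (stablePoissonKernel n α x₀ r x) := by
  unfold stablePoissonKernel
  fun_prop

/-- The harmonic measure of the ball `B(0, r)` at the origin, weighted by `u`. Integrating against
it the quotient of the Poisson kernels at `x` and at `0` recovers the Poisson integral of `u`. -/
noncomputable def weightedHarmonicMeasure (α : ℝ) (u : EuclideanSpace ℝ (Fin n) → ℝ) (r : ℝ) :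
    Measure (EuclideanSpace ℝ (Fin n)) :=
  (volume.restrict {v | r < dist v 0}).withDensity fun v ↦
    ENNReal.ofReal (stablePoissonKernel n α 0 r 0 v * u v)

lemma ae_restrict_lt_norm (r : ℝ) :
    ∀ᵐ v ∂volume.restrict {v : EuclideanSpace ℝ (Fin n) | r < dist v 0}, r < ‖v‖ := by
  have hmeas : MeasurableSet {v : EuclideanSpace ℝ (Fin n) | r < dist v 0} :=
    measurableSet_lt measurable_const (by fun_prop)
  filter_upwards [ae_restrict_mem hmeas] with v hv
  rwa [← dist_zero_right]

lemma ae_lt_norm_weightedHarmonicMeasure (α : ℝ) (u : EuclideanSpace ℝ (Fin n) → ℝ) (r : ℝ) :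
    ∀ᵐ v ∂weightedHarmonicMeasure α u r, r < ‖v‖ :=
  (withDensity_absolutelyContinuous _ _).ae_le (ae_restrict_lt_norm r)

variable {u : EuclideanSpace ℝ (Fin n) → ℝ}

lemma weightedHarmonicMeasure_univ (hα : α ∈ Icc (0 : ℝ) 2)
    (hu : IsAlphaHarmonic n α (ball 0 1) u) (hr : 0 < r) (hr1 : r < 1) :
    weightedHarmonicMeasure α u r univ = ENNReal.ofReal (u 0) := by
  obtain ⟨hint, heq⟩ := hu.2.2.2 0 r hr (closedBall_subset_ball hr1) 0 (mem_ball_self hr)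
  rw [weightedHarmonicMeasure, withDensity_apply _ .univ, Measure.restrict_univ, ← heq,
    ofReal_integral_eq_lintegral_ofReal hint]
  filter_upwards [ae_restrict_lt_norm r] with v hv
  exact mul_nonneg (stablePoissonKernel_zero_nonneg hα hr.le hv) (hu.2.1 v)

lemma weightedHarmonicMeasure_restrict_compl_closedBall_le (hα : α ∈ Icc (0 : ℝ) 2)
    (hu : ∀ x, 0 ≤ u x) (hr : 0 ≤ r) (hr1 : r < 1) :
    (weightedHarmonicMeasure α u r).restrict (closedBall 0 2)ᶜ ≤
      volume.withDensity fun v ↦ ENNReal.ofReal (stablePoissonConst n α * 2 ^ (n + α) *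
        (u v * (1 + ‖v‖) ^ (-(n : ℝ) - α))) := by
  have hmeas : MeasurableSet ((closedBall 0 2)ᶜ ∩ {v : EuclideanSpace ℝ (Fin n) | r < dist v 0}) :=
    measurableSet_closedBall.compl.inter (measurableSet_lt measurable_const (by fun_prop))
  rw [weightedHarmonicMeasure, restrict_withDensity measurableSet_closedBall.compl,
    Measure.restrict_restrict measurableSet_closedBall.compl]
  refine (withDensity_mono ?_).trans
    ((restrict_withDensity hmeas _).symm.trans_le Measure.restrict_le_self)
  filter_upwards [ae_restrict_mem hmeas] with v hv
  have hv2 : 2 < ‖v‖ := by simpa using hv.1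
  refine ENNReal.ofReal_le_ofReal ?_
  rw [mul_comm (u v), ← mul_assoc]
  exact mul_le_mul_of_nonneg_right (stablePoissonKernel_zero_le hα hr hr1 hv2.le) (hu v)

lemma eq_mul_integral_weightedHarmonicMeasure (hα : α ∈ Icc (0 : ℝ) 2)
    (hu : IsAlphaHarmonic n α (ball 0 1) u) (hr : 0 < r) (hr1 : r < 1)
    {x : EuclideanSpace ℝ (Fin n)} (hx : ‖x‖ < r) :
    u x = ((r ^ 2 - ‖x‖ ^ 2) / r ^ 2) ^ (α / 2) *
      ∫ v, exteriorKernel n x v ∂weightedHarmonicMeasure α u r := by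
  obtain ⟨hum, hu0, -, hpoisson⟩ := hu
  rw [← (hpoisson 0 r hr (closedBall_subset_ball hr1) x (mem_ball_zero_iff.2 hx)).2,
    weightedHarmonicMeasure,
    integral_withDensity_eq_integral_toReal_smul (by fun_prop) (by simp), ← integral_const_mul]
  refine integral_congr_ae ?_
  filter_upwards [ae_restrict_lt_norm r] with v hv
  rw [ENNReal.toReal_ofReal (mul_nonneg (stablePoissonKernel_zero_nonneg hα hr.le hv) (hu0 v)),
    smul_eq_mul, stablePoissonKernel_eq_mul_exteriorKernel hr hx hv]
  ring

lemma tendsto_sq_sub_sq_div_sq_rpow {ι : Type*} {l : Filter ι} {r : ι → ℝ}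
    (hr : Tendsto r l (𝓝 1)) (t : ℝ) (hα : 0 ≤ α) :
    Tendsto (fun i ↦ ((r i ^ 2 - t ^ 2) / r i ^ 2) ^ (α / 2)) l (𝓝 ((1 - t ^ 2) ^ (α / 2))) := by
  have hbase := ((hr.pow 2).sub_const (t ^ 2)).div (hr.pow 2) (by norm_num)
  simpa using hbase.rpow_const (p := α / 2) (.inr (by positivity))

lemma exists_measure_eq_mul_integral_exteriorKernel (hα : α ∈ Icc (0 : ℝ) 2)
    (hu : IsAlphaHarmonic n α (ball 0 1) u) :
    ∃ P : Measure (EuclideanSpace ℝ (Fin n)), IsFiniteMeasure P ∧ (∀ᵐ v ∂P, 1 ≤ ‖v‖) ∧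
      ∀ x, ‖x‖ < 1 → u x = (1 - ‖x‖ ^ 2) ^ (α / 2) * ∫ v, exteriorKernel n x v ∂P := by
  obtain ⟨r, -, hr, hrlim⟩ := exists_seq_strictMono_tendsto' (zero_lt_one' ℝ)
  have hmass (k) := weightedHarmonicMeasure_univ hα hu (hr k).1 (hr k).2
  let m (k : ℕ) : FiniteMeasure (EuclideanSpace ℝ (Fin n)) :=
    ⟨weightedHarmonicMeasure α u (r k), ⟨by simp [hmass k]⟩⟩
  have hm : ∀ s < 1, ∀ᶠ k in atTop, ∀ᵐ v ∂(m k : Measure (EuclideanSpace ℝ (Fin n))), s ≤ ‖v‖ := by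
    intro s hs
    filter_upwards [hrlim.eventually_const_lt hs] with k hk
    filter_upwards [ae_lt_norm_weightedHarmonicMeasure α u (r k)] with v hv
      using (hk.trans hv).le
  have := isFiniteMeasure_withDensity_ofReal
    (hu.2.2.1.const_mul (stablePoissonConst n α * 2 ^ (n + α))).2
  obtain ⟨U, hU, Q, hQ⟩ := exists_ultrafilter_tendsto_of_restrict_compl_closedBall_le
    (l := atTop) (m := m) (C := (u 0).toNNReal)
    (fun k ↦ (congrArg ENNReal.toNNReal (hmass k)).le)
    (fun k ↦ weightedHarmonicMeasure_restrict_compl_closedBall_le hα hu.2.1 (hr k).1.le (hr k).2)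
  have hQ1 : ∀ᵐ v ∂(Q : Measure (EuclideanSpace ℝ (Fin n))), 1 ≤ ‖v‖ := by
    have hall : ∀ᵐ v ∂(Q : Measure (EuclideanSpace ℝ (Fin n))), ∀ k, r k ≤ ‖v‖ :=
      ae_all_iff.2 fun k ↦ ae_le_norm_of_tendsto hQ (hU (hm _ (hr k).2))
    filter_upwards [hall] with v hv using le_of_tendsto' hrlim hv
  refine ⟨Q, inferInstance, hQ1, fun x hx ↦ ?_⟩
  refine tendsto_nhds_unique (tendsto_const_nhds.congr' ?_)
    ((tendsto_sq_sub_sq_div_sq_rpow (hrlim.mono_left hU) ‖x‖ hα.1).mul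
      (tendsto_integral_exteriorKernel hQ hx hQ1 (hU (hm _ (by linarith)))))
  filter_upwards [hU (hrlim.eventually_const_lt hx)] with k hk
  exact eq_mul_integral_weightedHarmonicMeasure hα hu (hr k).1 (hr k).2 hk

lemma martinKernel_eq_mul_exteriorKernel (n : ℕ) (α : ℝ) (x : EuclideanSpace ℝ (Fin n))
    {w : EuclideanSpace ℝ (Fin n)} (hw : ‖w‖ = 1) :
    martinKernel n α x w = (1 - ‖x‖ ^ 2) ^ (α / 2) * exteriorKernel n x w := by
  rw [martinKernel, exteriorKernel, hw, Real.rpow_neg dist_nonneg, Real.rpow_natCast, one_div,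
    inv_pow]

lemma stolzSet_subset_stolzRegion (n : ℕ) (β : ℝ) (z : EuclideanSpace ℝ (Fin n)) :
    stolzSet n β z ⊆ stolzRegion β z :=
  fun _ hy ↦ ⟨mem_ball_zero_iff.1 hy.1, hy.2.2⟩

end StableHarmonic

end RelativeFatou

open RelativeFatou in
theorem stmt12_general (n : ℕ) (α : ℝ) (hα : α ∈ Set.Ioo (0 : ℝ) 2)
    (ν : Measure (EuclideanSpace ℝ (Fin n))) [IsFiniteMeasure ν]
    (hνS : ν (sphere (0 : EuclideanSpace ℝ (Fin n)) 1)ᶜ = 0)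
    (u : EuclideanSpace ℝ (Fin n) → ℝ)
    (hu : IsAlphaHarmonic n α (ball (0 : EuclideanSpace ℝ (Fin n)) 1) u) :
    ∃ f : EuclideanSpace ℝ (Fin n) → ℝ, Integrable f ν ∧ ∀ᵐ z ∂ν, ∀ β : ℝ,
      Tendsto (fun x => u x / ∫ w, martinKernel n α x w ∂ν)
        (nhdsWithin z (stolzSet n β z)) (nhds (f z)) := by
  obtain ⟨P, _, hP, hPu⟩ :=
    exists_measure_eq_mul_integral_exteriorKernel (Ioo_subset_Icc_self hα) hu
  have hν : ∀ᵐ w ∂ν, ‖w‖ = 1 := by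
    filter_upwards [mem_ae_iff.2 hνS] with w hw using mem_sphere_zero_iff_norm.1 hw
  refine ⟨fun z ↦ (P.rnDeriv ν z).toReal, Measure.integrable_toReal_rnDeriv, ?_⟩
  filter_upwards [ae_tendsto_integral_exteriorKernel_div hP hν] with z hz β
  refine ((hz β).mono_left (nhdsWithin_mono z (stolzSet_subset_stolzRegion n β z))).congr' ?_
  filter_upwards [self_mem_nhdsWithin] with x hx
  have hx1 : ‖x‖ < 1 := mem_ball_zero_iff.1 hx.1
  have hpos : 0 < (1 - ‖x‖ ^ 2) ^ (α / 2) :=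
    Real.rpow_pos_of_pos (by nlinarith [norm_nonneg x]) _
  have hh : ∫ w, martinKernel n α x w ∂ν =
      (1 - ‖x‖ ^ 2) ^ (α / 2) * ∫ w, exteriorKernel n x w ∂ν := by
    rw [← integral_const_mul]
    exact integral_congr_ae (hν.mono fun w hw ↦ martinKernel_eq_mul_exteriorKernel n α x hw)
  rw [hPu x hx1, hh, mul_div_mul_left _ _ hpos.ne', finrank_euclideanSpace_fin]

/-- Relative Fatou theorem in the unit ball: let `ν` be a nonzero
finite Borel measure on the unit sphere `S`, `h(x) = ∫_S M(x,w) ν(dw)`. For every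
nonnegative α-harmonic `u` in `B`, for ν-a.e. `z ∈ S` and every `β > 1`, the limit
of `u(x)/h(x)` as `x → z`, `x ∈ A^β_z`, exists and is finite. -/
theorem stmt12 (n : ℕ) (hn : 2 ≤ n) (α : ℝ) (hα : α ∈ Set.Ioo (0 : ℝ) 2)
    (ν : Measure (EuclideanSpace ℝ (Fin n))) [IsFiniteMeasure ν] (hν : ν ≠ 0)
    (hνS : ν (sphere (0 : EuclideanSpace ℝ (Fin n)) 1)ᶜ = 0)
    (u : EuclideanSpace ℝ (Fin n) → ℝ)
    (hu : IsAlphaHarmonic n α (ball (0 : EuclideanSpace ℝ (Fin n)) 1) u) :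
    ∀ᵐ z ∂ν, ∀ β : ℝ, 1 < β → ∃ L : ℝ,
      Tendsto (fun x => u x / ∫ w, martinKernel n α x w ∂ν)
        (nhdsWithin z (stolzSet n β z)) (nhds L) := by
  obtain ⟨f, -, hf⟩ := stmt12_general n α hα ν hνS u hu
  filter_upwards [hf] with z hz β _ using ⟨f z, hz β⟩
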